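/- Let q > 0 and let x, a ∈ ℝ³ be nonzero with ρ(x,a) > 1. Then for each sign ι ∈ {+1, −1} the generating function S_ι satisfies the Hamilton–Jacobi (eikonal) identity |∇_x S_ι(x,a)|² = |a|² − q/|x|. -/

import Mathlib

/-!
The functions `ξ = |x||a| + x·a` and `η = |x||a| − x·a` are parabolic coordinates: their gradients
`(|a|/|x|) x ± a` are orthogonal, with squared lengths `2 (|a|/|x|) ξ` and `2 (|a|/|x|) η`. Hence
`|∇(f(ξ) + g(η))|² = 2 (|a|/|x|) (f'(ξ)² ξ + g'(η)² η)`, so the Hamilton–Jacobi equation separates.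
For `S_ι`, since `ρ = |a| ξ / (2q)` and `K'(s)² = 1 − 1/s`, the two summands are
`f'(ξ)² ξ = (ξ − 2q/|a|) / 4` and `g'(η)² η = η / 4`, with sum `(|x||a| − q/|a|) / 2`.
-/

open scoped RealInnerProductSpace

noncomputable section

/-- Euclidean three-space. -/
abbrev R3 : Type := EuclideanSpace ℝ (Fin 3)

/-- `ρ(x,a) = (|a|/(2q))(|x||a| + x·a)`. -/
def rhoF (q : ℝ) (x a : R3) : ℝ := ‖a‖ / (2 * q) * (‖x‖ * ‖a‖ + ⟪x, a⟫)

/-- `K(s) = √(s(s−1)) − ln(√s + √(s−1))`. -/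
def KF (s : ℝ) : ℝ := Real.sqrt (s * (s - 1)) - Real.log (Real.sqrt s + Real.sqrt (s - 1))

/-- The generating function `S_ι(x,a) = ι·(q/|a|)·K(ρ(x,a)) − (|x||a| − x·a)/2`. -/
def Sgen (q ι : ℝ) (x a : R3) : ℝ :=
  ι * (q / ‖a‖) * KF (rhoF q x a) - (‖x‖ * ‖a‖ - ⟪x, a⟫) / 2

lemma hasDerivAt_arcosh_sqrt {s : ℝ} (hs : 1 < s) :
    HasDerivAt (fun t => Real.arcosh √t) (1 / (2 * √(s * (s - 1)))) s := by
  have hs₀ : 0 < s := one_pos.trans hs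
  refine ((Real.hasDerivAt_arcosh (Real.lt_sqrt_of_sq_lt (by simpa using hs))).comp s
    (Real.hasDerivAt_sqrt hs₀.ne')).congr_deriv ?_
  rw [Real.sq_sqrt hs₀.le, Real.sqrt_mul hs₀.le]
  ring

lemma hasDerivAt_sqrt_mul_sub_one {s : ℝ} (hs : s * (s - 1) ≠ 0) :
    HasDerivAt (fun t => √(t * (t - 1))) ((2 * s - 1) / (2 * √(s * (s - 1)))) s := by
  refine (((hasDerivAt_id s).mul ((hasDerivAt_id s).sub_const 1)).sqrt hs).congr_deriv ?_
  simp only [id_eq, Pi.mul_apply]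
  ring

lemma KF_eq_sqrt_sub_arcosh {s : ℝ} (hs : 0 ≤ s) :
    KF s = √(s * (s - 1)) - Real.arcosh √s := by
  rw [KF, Real.arcosh, Real.sq_sqrt hs]

lemma hasDerivAt_KF {s : ℝ} (hs : 1 < s) : HasDerivAt KF √(1 - 1 / s) s := by
  have hs₀ : 0 < s := one_pos.trans hs
  have hderiv := (hasDerivAt_sqrt_mul_sub_one (mul_pos hs₀ (sub_pos.2 hs)).ne').sub
    (hasDerivAt_arcosh_sqrt hs)
  refine (hderiv.congr_of_eventuallyEq ?_).congr_deriv ?_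
  · filter_upwards [lt_mem_nhds hs₀] with t ht using KF_eq_sqrt_sub_arcosh ht.le
  · calc (2 * s - 1) / (2 * √(s * (s - 1))) - 1 / (2 * √(s * (s - 1)))
        = (s - 1) / √(s * (s - 1)) := by ring
      _ = √(s - 1) / √s := by
        rw [Real.sqrt_mul hs₀.le, mul_comm, ← div_div, Real.div_sqrt]
      _ = √(1 - 1 / s) := by
        rw [← Real.sqrt_div (sub_pos.2 hs).le, sub_div, div_self hs₀.ne']

lemma hasDerivAt_const_mul_KF_const_mul {c t : ℝ} (C : ℝ) (h : 1 < c * t) :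
    HasDerivAt (fun u => C * KF (c * u)) (C * c * √(1 - 1 / (c * t))) t := by
  refine (((hasDerivAt_KF h).comp t ((hasDerivAt_id t).const_mul c)).const_mul C).congr_deriv ?_
  ring

section ParabolicCoordinates

variable {E : Type*} [NormedAddCommGroup E] [InnerProductSpace ℝ E]

/-- The parabolic coordinate `ξ = |x||a| + x·a` with focus at the origin and axis `a`, scaled by
`|a|`. Its companion `η = |x||a| − x·a` is the same function with axis `-a`. -/
def parabolicCoord (a x : E) : ℝ := ‖x‖ * ‖a‖ + ⟪x, a⟫

lemma parabolicCoord_neg (a x : E) : parabolicCoord (-a) x = ‖x‖ * ‖a‖ - ⟪x, a⟫ := by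
  rw [parabolicCoord, norm_neg, inner_neg_right, sub_eq_add_neg]

lemma parabolicCoord_add_parabolicCoord_neg (a x : E) :
    parabolicCoord a x + parabolicCoord (-a) x = 2 * (‖x‖ * ‖a‖) := by
  rw [parabolicCoord_neg, parabolicCoord]
  ring

lemma norm_div_norm_smul {x : E} (hx : x ≠ 0) (a : E) : ‖(‖a‖ / ‖x‖) • x‖ = ‖a‖ := by
  rw [norm_smul, norm_div, norm_norm, norm_norm, div_mul_cancel₀ _ (norm_ne_zero_iff.2 hx)]

lemma norm_sq_norm_div_norm_smul_add {x : E} (hx : x ≠ 0) (a : E) :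
    ‖(‖a‖ / ‖x‖) • x + a‖ ^ 2 = 2 * (‖a‖ / ‖x‖) * parabolicCoord a x := by
  have hx' : ‖x‖ ≠ 0 := norm_ne_zero_iff.2 hx
  rw [norm_add_sq_real, norm_div_norm_smul hx, real_inner_smul_left, parabolicCoord]
  field_simp
  ring

lemma inner_norm_div_norm_smul_add_neg {x : E} (hx : x ≠ 0) (a : E) :
    ⟪(‖a‖ / ‖x‖) • x + a, (‖a‖ / ‖x‖) • x + -a⟫ = 0 := by
  rw [← sub_eq_add_neg, real_inner_add_sub_eq_zero_iff, norm_div_norm_smul hx]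

variable [CompleteSpace E]

lemma hasGradientAt_norm {x : E} (hx : x ≠ 0) : HasGradientAt norm (‖x‖⁻¹ • x) x := by
  have hsqrt := (hasStrictFDerivAt_norm_sq x).hasFDerivAt.sqrt (by simpa using hx)
  simp only [Real.sqrt_sq (norm_nonneg _)] at hsqrt
  refine hsqrt.congr_fderiv ?_
  ext y
  simp only [smul_apply, innerSL_apply_apply, nsmul_eq_mul, Nat.cast_ofNat,
    smul_eq_mul, map_smul, InnerProductSpace.toDual_apply_apply]
  field_simp

lemma hasGradientAt_parabolicCoord {x : E} (hx : x ≠ 0) (a : E) :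
    HasGradientAt (parabolicCoord a) ((‖a‖ / ‖x‖) • x + a) x := by
  have hinner : HasFDerivAt (fun y => ⟪y, a⟫) (innerSL ℝ a) x :=
    (innerSL ℝ a).hasFDerivAt.congr_of_eventuallyEq (.of_forall fun y => real_inner_comm a y)
  refine (((hasGradientAt_norm hx).hasFDerivAt.mul_const ‖a‖).add hinner).congr_fderiv ?_
  ext y
  simp only [add_apply, smul_apply, smul_eq_mul, map_add, map_smul,
    InnerProductSpace.toDual_apply_apply, innerSL_apply_apply]
  ring

lemma hasGradientAt_comp_parabolicCoord {f : ℝ → ℝ} {f' : ℝ} {a x : E} (hx : x ≠ 0)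
    (hf : HasDerivAt f f' (parabolicCoord a x)) :
    HasGradientAt (fun y => f (parabolicCoord a y)) (f' • ((‖a‖ / ‖x‖) • x + a)) x := by
  refine (hf.comp_hasFDerivAt x (hasGradientAt_parabolicCoord hx a).hasFDerivAt).congr_fderiv ?_
  simp only [map_smulₛₗ, conj_trivial]

lemma hasGradientAt_parabolic_separated {f g : ℝ → ℝ} {f' g' : ℝ} {a x : E} (hx : x ≠ 0)
    (hf : HasDerivAt f f' (parabolicCoord a x)) (hg : HasDerivAt g g' (parabolicCoord (-a) x)) :
    HasGradientAt (fun y => f (parabolicCoord a y) + g (parabolicCoord (-a) y))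
      (f' • ((‖a‖ / ‖x‖) • x + a) + g' • ((‖a‖ / ‖x‖) • x + -a)) x := by
  have hη := hasGradientAt_comp_parabolicCoord hx hg
  rw [norm_neg] at hη
  rw [hasGradientAt_iff_hasFDerivAt, map_add]
  exact (hasGradientAt_comp_parabolicCoord hx hf).hasFDerivAt.add hη.hasFDerivAt

lemma norm_sq_gradient_parabolic_separated {f g : ℝ → ℝ} {f' g' : ℝ} {a x : E} (hx : x ≠ 0)
    (hf : HasDerivAt f f' (parabolicCoord a x)) (hg : HasDerivAt g g' (parabolicCoord (-a) x)) :
    ‖gradient (fun y => f (parabolicCoord a y) + g (parabolicCoord (-a) y)) x‖ ^ 2 =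
      2 * (‖a‖ / ‖x‖) * (f' ^ 2 * parabolicCoord a x + g' ^ 2 * parabolicCoord (-a) x) := by
  have hη_sq := norm_sq_norm_div_norm_smul_add hx (-a)
  rw [norm_neg] at hη_sq
  rw [(hasGradientAt_parabolic_separated hx hf hg).gradient, norm_add_sq_real,
    real_inner_smul_left, real_inner_smul_right, inner_norm_div_norm_smul_add_neg hx,
    norm_smul, norm_smul, mul_pow, mul_pow, norm_sq_norm_div_norm_smul_add hx, hη_sq,
    Real.norm_eq_abs, Real.norm_eq_abs, sq_abs, sq_abs]
  ring

theorem generating_function_hamilton_jacobi_general {q ι : ℝ} (hq : 0 < q) (hι : ι ^ 2 = 1)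
    {x a : E} (hx : x ≠ 0) (ha : a ≠ 0) (hρ : 1 < ‖a‖ / (2 * q) * parabolicCoord a x) :
    ‖gradient (fun y => ι * (q / ‖a‖) * KF (‖a‖ / (2 * q) * parabolicCoord a y)
      - (‖y‖ * ‖a‖ - ⟪y, a⟫) / 2) x‖ ^ 2 = ‖a‖ ^ 2 - q / ‖x‖ := by
  have hx' : ‖x‖ ≠ 0 := norm_ne_zero_iff.2 hx
  have ha' : ‖a‖ ≠ 0 := norm_ne_zero_iff.2 ha
  have hlinear : HasDerivAt (fun t : ℝ => -(t / 2)) (-(1 / 2)) (parabolicCoord (-a) x) :=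
    ((hasDerivAt_id _).div_const 2).neg
  have hsum := parabolicCoord_add_parabolicCoord_neg a x
  simp only [← parabolicCoord_neg, sub_eq_add_neg (_ * KF _)]
  rw [norm_sq_gradient_parabolic_separated hx (hasDerivAt_const_mul_KF_const_mul _ hρ)
    hlinear]
  generalize parabolicCoord (-a) x = η at *
  generalize parabolicCoord a x = ξ at *
  have hξ : ξ ≠ 0 := by
    rintro rfl
    norm_num at hρ
  have hξ_term : (ι * (q / ‖a‖) * (‖a‖ / (2 * q)) * √(1 - 1 / (‖a‖ / (2 * q) * ξ))) ^ 2 * ξ =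
      (ξ - 2 * q / ‖a‖) / 4 := by
    rw [mul_pow, Real.sq_sqrt (sub_nonneg.2 ((div_le_one (one_pos.trans hρ)).2 hρ.le))]
    field_simp
    rw [hι]
    ring
  calc 2 * (‖a‖ / ‖x‖) * (_ + (-(1 / 2)) ^ 2 * η)
      = ‖a‖ / ‖x‖ * (ξ + η - 2 * q / ‖a‖) / 2 := by rw [hξ_term]; ring
    _ = ‖a‖ ^ 2 - q / ‖x‖ := by rw [hsum]; field_simp

end ParabolicCoordinates

/-- On the region `ρ(x,a) > 1` the generating functions `S_ι` satisfy the
Hamilton–Jacobi (eikonal) identity `|∇ₓ S_ι(x,a)|² = |a|² − q/|x|`. -/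
theorem generating_function_hamilton_jacobi (q : ℝ) (hq : 0 < q)
    (ι : ℝ) (hι : ι = 1 ∨ ι = -1)
    (x a : R3) (hx : x ≠ 0) (ha : a ≠ 0) (hρ : 1 < rhoF q x a) :
    ‖gradient (fun y => Sgen q ι y a) x‖ ^ 2 = ‖a‖ ^ 2 - q / ‖x‖ := by
  exact generating_function_hamilton_jacobi_general hq (sq_eq_one_iff.2 hι) hx ha hρ
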